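/- arXiv:2511.12925 — 4 statements merged into one kernel-verified Lean document; each statement's English description precedes it below -/
import Mathlib

section
/- For every natural number k, Fib(2k+5)² + Fib(2k+1)² - 7·Fib(2k+5)·Fib(2k+1) + 9 = 0; that is, the outer corner pairs (p, q) = (Fib(2k+5), Fib(2k+1)) satisfy the Diophantine equation p² + q² - 7pq + 9 = 0 with equality. -/
theorem fib_cassini_aux (k : ℕ) :
    (Nat.fib (2 * k + 2) : ℤ) ^ 2 - (Nat.fib (2 * k + 1) : ℤ) * (Nat.fib (2 * k + 2) : ℤ)
      - (Nat.fib (2 * k + 1) : ℤ) ^ 2 = -1 := by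
  induction k with
  | zero => simp
  | succ k ih =>
    have h3 : Nat.fib (2 * (k + 1) + 1) = Nat.fib (2 * k + 1) + Nat.fib (2 * k + 2) :=
      Nat.fib_add_two (n := 2 * k + 1)
    have h4 : Nat.fib (2 * (k + 1) + 2) = Nat.fib (2 * k + 2) + Nat.fib (2 * (k + 1) + 1) :=
      Nat.fib_add_two (n := 2 * k + 2)
    rw [h4, h3]
    push_cast
    linear_combination ih

/-- For every natural number `k`,
`Fib (2k+5)^2 + Fib (2k+1)^2 - 7 * Fib (2k+5) * Fib (2k+1) + 9 = 0`;
that is, the outer corner pairs `(p, q) = (Fib (2k+5), Fib (2k+1))` satisfy the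
Diophantine equation `p² + q² - 7pq + 9 = 0` with equality. -/
theorem outer_corner_diophantine (k : ℕ) :
    (Nat.fib (2 * k + 5) : ℤ) ^ 2 + (Nat.fib (2 * k + 1) : ℤ) ^ 2 -
      7 * (Nat.fib (2 * k + 5) : ℤ) * (Nat.fib (2 * k + 1) : ℤ) + 9 = 0 := by
  have h := fib_cassini_aux k
  have h3 : Nat.fib (2 * k + 3) = Nat.fib (2 * k + 1) + Nat.fib (2 * k + 2) :=
    Nat.fib_add_two (n := 2 * k + 1)
  have h4 : Nat.fib (2 * k + 4) = Nat.fib (2 * k + 2) + Nat.fib (2 * k + 3) :=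
    Nat.fib_add_two (n := 2 * k + 2)
  have h5 : Nat.fib (2 * k + 5) = Nat.fib (2 * k + 3) + Nat.fib (2 * k + 4) :=
    Nat.fib_add_two (n := 2 * k + 3)
  rw [h5, h4, h3]
  push_cast
  linear_combination 9 * h
end

section
/- Let p ≥ q ≥ 1 be coprime integers with p + q divisible by 3. Then p² + q² - 7pq + 9 ≥ 0 holds if and only if either (p, q) = (Fib(2k+5), Fib(2k+1)) for some natural number k, or (p, q) = (2, 1), or p > ((7 + 3√5)/2)·q. -/
lemma fib_inv (k : ℕ) : (Nat.fib (2*k+1) : ℤ)^2 + Nat.fib (2*k+1) * Nat.fib (2*k+2)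
    - (Nat.fib (2*k+2) : ℤ)^2 = 1 := by
  induction k with
  | zero => simp
  | succ n ih =>
    have h3 : Nat.fib (2*(n+1)+1) = Nat.fib (2*n+1) + Nat.fib (2*n+2) := Nat.fib_add_two
    have h4 : Nat.fib (2*(n+1)+2) = Nat.fib (2*n+2) + Nat.fib (2*(n+1)+1) := Nat.fib_add_two
    rw [h4, h3]
    push_cast
    linarith

lemma fib_five (m : ℕ) : Nat.fib (m+4) = 2 * Nat.fib m + 3 * Nat.fib (m+1) := by
  have h2 : Nat.fib (m+2) = Nat.fib m + Nat.fib (m+1) := Nat.fib_add_two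
  have h3 : Nat.fib (m+3) = Nat.fib (m+1) + Nat.fib (m+2) := Nat.fib_add_two
  have h4 : Nat.fib (m+4) = Nat.fib (m+2) + Nat.fib (m+3) := Nat.fib_add_two
  omega

lemma fib_nine (m : ℕ) : Nat.fib (m+8) + Nat.fib m = 7 * Nat.fib (m+4) := by
  have h2 : Nat.fib (m+2) = Nat.fib m + Nat.fib (m+1) := Nat.fib_add_two
  have h3 : Nat.fib (m+3) = Nat.fib (m+1) + Nat.fib (m+2) := Nat.fib_add_two
  have h4 : Nat.fib (m+4) = Nat.fib (m+2) + Nat.fib (m+3) := Nat.fib_add_two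
  have h5 : Nat.fib (m+5) = Nat.fib (m+3) + Nat.fib (m+4) := Nat.fib_add_two
  have h8 : Nat.fib (m+8) = 2 * Nat.fib (m+4) + 3 * Nat.fib (m+5) := fib_five (m+4)
  omega

lemma descent (n : ℕ) : ∀ p q : ℤ, q ≤ n → 1 ≤ q → q ≤ p → p^2+q^2-7*p*q = -9 →
    (∃ k : ℕ, p = (Nat.fib (2 * k + 5) : ℤ) ∧ q = (Nat.fib (2 * k + 1) : ℤ)) ∨
      (p = 2 ∧ q = 1) := by
  induction n with
  | zero => intro p q h1 h2; norm_num at h1; omega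
  | succ n ih =>
    intro p q hn hq hpq h
    by_cases h1 : q = 1
    · subst h1
      have : (p-2)*(p-5) = 0 := by linarith
      rcases mul_eq_zero.mp this with h | h
      · right; constructor <;> omega
      · left; refine ⟨0, ?_, ?_⟩
        · have : p = 5 := by omega
          rw [this]; decide
        · simp
    · have hq2 : 2 ≤ q := by omega
      have hv : p * (7*q-p) = q^2+9 := by linarith
      have hpos : 1 ≤ 7*q-p := by
        by_contra hc
        have : 7*q-p ≤ 0 := by omega
        nlinarith
      have hlt : 7*q-p < q := by
        by_contra hc
        have : q ≤ 7*q-p := by omega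
        have := mul_nonneg (sub_nonneg.2 hpq) (sub_nonneg.2 this)
        nlinarith
      push_cast at hn
      rcases ih q (7*q-p) (by omega) hpos hlt.le (by linarith) with ⟨k, a, b⟩ | ⟨a, b⟩
      · left
        refine ⟨k+2, ?_, ?_⟩
        · have := fib_nine (2*k+1)
          have e : 2*(k+2)+5 = 2*k+1+8 := by ring
          rw [e]
          have e2 : 2*k+1+4 = 2*k+5 := by ring
          rw [e2] at this
          omega
        · rw [a]; congr 1
      · left
        refine ⟨1, ?_, ?_⟩
        · have : p = 13 := by omega
          rw [this]; decide
        · rw [a]; decide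

/-- Let `p ≥ q ≥ 1` be coprime integers with `p + q` divisible by `3`. Then
`p² + q² - 7pq + 9 ≥ 0` holds if and only if either
`(p, q) = (Fib (2k+5), Fib (2k+1))` for some natural number `k`, or
`(p, q) = (2, 1)`, or `p > ((7 + 3√5)/2) * q`. -/
theorem diophantine_solutions (p q : ℤ) (hq : 1 ≤ q) (hpq : q ≤ p)
    (hcop : IsCoprime p q) (hdvd : (3 : ℤ) ∣ p + q) :
    p ^ 2 + q ^ 2 - 7 * p * q + 9 ≥ 0 ↔
      (∃ k : ℕ, p = (Nat.fib (2 * k + 5) : ℤ) ∧ q = (Nat.fib (2 * k + 1) : ℤ)) ∨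
      (p = 2 ∧ q = 1) ∨
      ((p : ℝ) > (7 + 3 * Real.sqrt 5) / 2 * (q : ℝ)) := by
  have hs : Real.sqrt 5 ^ 2 = 5 := Real.sq_sqrt (by norm_num)
  have hs2 : 2 < Real.sqrt 5 := Real.lt_sqrt_of_sq_lt (by norm_num)
  have hq' : (1:ℝ) ≤ q := by exact_mod_cast hq
  have hpq' : (q:ℝ) ≤ p := by exact_mod_cast hpq
  have hfac : (p:ℝ)^2 + q^2 - 7*p*q =
      (p - (7 + 3 * Real.sqrt 5) / 2 * q) * (p - (7 - 3 * Real.sqrt 5) / 2 * q) := by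
    linear_combination (9/4 * (q:ℝ)^2) * hs
  have hpos : 0 < (p:ℝ) - (7 - 3 * Real.sqrt 5) / 2 * q := by nlinarith
  constructor
  · intro h
    obtain ⟨m, hm⟩ := hdvd
    have e : p^2+q^2-7*p*q = 9*(m^2-p*q) := by
      have : (p+q)^2 = (3*m)^2 := by rw [hm]
      linarith
    have hge : -1 ≤ m^2-p*q := by omega
    rcases lt_trichotomy (m^2-p*q) 0 with h0 | h0 | h0
    · rcases descent q.toNat p q (by omega) hq hpq (by omega) with h | h
      · exact Or.inl h
      · exact Or.inr (Or.inl h)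
    · exfalso
      -- coprime with product a square and p^2+q^2 = 7pq: q divides p^2
      have hd : q ∣ p ^ 2 := ⟨7*p - q, by linarith⟩
      have hu : IsUnit q := (hcop.symm.pow_right (n := 2)).isUnit_of_dvd' dvd_rfl hd
      have hq1 : q = 1 := by
        rcases Int.isUnit_iff.mp hu with h | h <;> omega
      subst hq1
      have h7 : p * (7 - p) = 1 := by linarith
      have hp : p ∣ 1 := ⟨_, h7.symm⟩
      have := Int.le_of_dvd one_pos hp
      have : p = 1 := by omega
      subst this
      norm_num at h7
    · right; right
      have h1 : 0 < p^2+q^2-7*p*q := by omega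
      have h2 : (0:ℝ) < (p:ℝ)^2 + q^2 - 7*p*q := by exact_mod_cast h1
      rw [hfac] at h2
      have := pos_of_mul_pos_left h2 hpos.le
      linarith
  · rintro (⟨k, a, b⟩ | ⟨a, b⟩ | h)
    · have h5 : Nat.fib (2*k+5) = 2 * Nat.fib (2*k+1) + 3 * Nat.fib (2*k+2) := fib_five (2*k+1)
      have := fib_inv k
      rw [a, b, h5]
      push_cast
      nlinarith
    · subst a b; norm_num
    · have h2 : (0:ℝ) < (p:ℝ)^2 + q^2 - 7*p*q := by
        rw [hfac]; exact mul_pos (by linarith) hpos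
      have h1 : 0 < p^2+q^2-7*p*q := by exact_mod_cast h2
      omega
end

section
/- Let S : ℝ \ {0} → ℝ be given by S(x) = 7 - 1/x, and let τ⁴ := (7 + 3√5)/2. Then the iterated images S^i([7, ∞)) for i = 0, 1, 2, ... are pairwise disjoint subsets of (τ⁴, ∞), and their union equals the open interval (τ⁴, ∞). -/
/-- Let `S : ℝ → ℝ` be given by `S x = 7 - 1/x` (defined away from `0`), and let
`τ⁴ := (7 + 3√5)/2`. Then the iterated images `S^[i] '' [7, ∞)` for `i = 0, 1, 2, ...`
are pairwise disjoint subsets of `(τ⁴, ∞)`, and their union equals `(τ⁴, ∞)`. -/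
theorem shift_symmetry_decomposition :
    let S : ℝ → ℝ := fun x => 7 - 1 / x
    let τ4 : ℝ := (7 + 3 * Real.sqrt 5) / 2
    (∀ i j : ℕ, i ≠ j → Disjoint (S^[i] '' Set.Ici 7) (S^[j] '' Set.Ici 7)) ∧
    (∀ i : ℕ, S^[i] '' Set.Ici 7 ⊆ Set.Ioi τ4) ∧
    (⋃ i : ℕ, S^[i] '' Set.Ici 7) = Set.Ioi τ4 := by
  intro S t
  have h5 : Real.sqrt 5 ^ 2 = 5 := Real.sq_sqrt (by norm_num)
  have h50 : 0 ≤ Real.sqrt 5 := Real.sqrt_nonneg 5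
  have ht : t ^ 2 = 7 * t - 1 := by simp only [t]; nlinarith
  have ht3 : 3 < t := by simp only [t]; nlinarith
  have ht7 : t < 7 := by nlinarith
  clear_value t
  have hS : ∀ x, t < x → t < S x := by
    intro x hx
    have hx0 : 0 < x := by linarith
    have : 1 / x < 7 - t := by
      rw [div_lt_iff₀ hx0]
      nlinarith
    simp only [S]; linarith
  have hS7 : ∀ x, t < x → S x < 7 := by
    intro x hx
    have : 0 < 1 / x := by
      have hx0 : 0 < x := by linarith
      positivity
    simp only [S]; linarith
  have hinj : Function.Injective S := by
    intro x y h
    simpa [S] using h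
  have hit : ∀ (i : ℕ) x, t < x → t < S^[i] x := by
    intro i
    induction i with
    | zero => intro x hx; simpa using hx
    | succ n ih =>
      intro x hx
      rw [Function.iterate_succ_apply']
      exact hS _ (ih x hx)
  have hsub : ∀ i : ℕ, S^[i] '' Set.Ici 7 ⊆ Set.Ioi t := by
    rintro i _ ⟨x, hx, rfl⟩
    exact hit i x (lt_of_lt_of_le ht7 hx)
  have key : ∀ i k : ℕ, ∀ a b : ℝ, 7 ≤ a → 7 ≤ b → S^[i] a ≠ S^[i + (k + 1)] b := by
    intro i k a b ha hb h
    rw [Function.iterate_add_apply] at h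
    have h2 := hinj.iterate i h
    rw [Function.iterate_succ_apply'] at h2
    have := hS7 _ (hit k b (by linarith))
    linarith
  have hcov : ∀ n : ℕ, ∀ x : ℝ, t < x → 7 ≤ 2 ^ n * (x - t) →
      ∃ i : ℕ, x ∈ S^[i] '' Set.Ici 7 := by
    intro n
    induction n with
    | zero =>
      intro x hx h
      exact ⟨0, x, by simp only [Set.mem_Ici]; linarith, rfl⟩
    | succ n ih =>
      intro x hx h
      by_cases h7 : 7 ≤ x
      · exact ⟨0, x, h7, rfl⟩
      have h7' : 0 < 7 - x := by linarith
      have hd : 2 * (x - t) ≤ 1 / (7 - x) - t := by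
        rw [le_sub_iff_add_le, le_div_iff₀ h7']
        have h1 : (7 - x) ≤ 1 := by nlinarith
        nlinarith [mul_pos h7' (sub_pos.2 hx)]
      obtain ⟨i, a, ha, hai⟩ := ih (1 / (7 - x)) (by linarith) (by
        have := mul_le_mul_of_nonneg_left hd (by positivity : (0:ℝ) ≤ 2 ^ n)
        rw [pow_succ] at h
        linarith)
      refine ⟨i + 1, a, ha, ?_⟩
      rw [Function.iterate_succ_apply', hai]
      simp [S]
  refine ⟨?_, hsub, ?_⟩
  · intro i j hij
    rw [Set.disjoint_left]
    rintro _ ⟨a, ha, rfl⟩ ⟨b, hb, h⟩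
    rcases lt_or_gt_of_ne hij with hlt | hlt
    · obtain ⟨k, rfl⟩ := Nat.exists_eq_add_of_lt hlt
      exact key i k a b ha hb h.symm
    · obtain ⟨k, rfl⟩ := Nat.exists_eq_add_of_lt hlt
      exact key j k b a hb ha h
  · apply Set.Subset.antisymm (Set.iUnion_subset hsub)
    intro x hx
    have hx' : 0 < x - t := sub_pos.2 hx
    obtain ⟨n, hn⟩ := pow_unbounded_of_one_lt (7 / (x - t)) (by norm_num : (1:ℝ) < 2)
    rw [div_lt_iff₀ hx'] at hn
    exact Set.mem_iUnion.2 (hcov n x hx hn.le)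
end

section
/- Define W : ℤ≥0 × ℤ≥0 → ℤ × ℤ by W(p, q) = (-q, p - 5q) if p ≥ 2q, W(p, q) = (q - p, q - 2p) if q/2 ≤ p ≤ 2q, and W(p, q) = (p, q - 2p) if 2p ≤ q. Then: (i) the three formulas agree on the overlaps of their domains (i.e. when p = 2q and when q = 2p), so W is well defined; (ii) W(p, 0) = W(0, p) = (0, p) for all p; and (iii) W descends to a bijection from the quotient of ℤ≥0 × ℤ≥0 by the identifications (p, 0) ∼ (0, p) onto ℤ × ℤ. -/
/-- The piecewise linear map `W_{T₀}` of the fundamental bijection for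
`(ℂP², N₀)` with its standard toric model: `W (p, q) = (-q, p - 5q)` if `p ≥ 2q`,
`W (p, q) = (q - p, q - 2p)` if `q/2 ≤ p ≤ 2q`, and `W (p, q) = (p, q - 2p)` if
`2p ≤ q`. -/
noncomputable def Wmap : ℕ × ℕ → ℤ × ℤ := fun x =>
  if 2 * x.2 ≤ x.1 then (-(x.2 : ℤ), (x.1 : ℤ) - 5 * (x.2 : ℤ))
  else if 2 * x.1 ≤ x.2 then ((x.1 : ℤ), (x.2 : ℤ) - 2 * (x.1 : ℤ))
  else ((x.2 : ℤ) - (x.1 : ℤ), (x.2 : ℤ) - 2 * (x.1 : ℤ))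

/-- (i) The three defining formulas of `W` agree on the overlaps of their domains
(when `p = 2q` and when `q = 2p`), so `W` is well defined; (ii) `W (p, 0) = W (0, p)
= (0, p)` for all `p`; (iii) `W` descends to a bijection from the quotient of
`ℕ × ℕ` by the identifications `(p, 0) ∼ (0, p)` onto `ℤ × ℤ`. -/
theorem Wmap_well_defined_and_bijective :
    -- (i) the formulas agree on overlaps
    (∀ p q : ℕ, p = 2 * q →
      ((-(q : ℤ), (p : ℤ) - 5 * (q : ℤ)) : ℤ × ℤ) =
        ((q : ℤ) - (p : ℤ), (q : ℤ) - 2 * (p : ℤ))) ∧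
    (∀ p q : ℕ, q = 2 * p →
      (((q : ℤ) - (p : ℤ), (q : ℤ) - 2 * (p : ℤ)) : ℤ × ℤ) =
        ((p : ℤ), (q : ℤ) - 2 * (p : ℤ))) ∧
    -- (ii) boundary values
    (∀ p : ℕ, Wmap (p, 0) = ((0 : ℤ), (p : ℤ)) ∧ Wmap (0, p) = ((0 : ℤ), (p : ℤ))) ∧
    -- (iii) W descends to a bijection from (ℕ × ℕ)/((p,0) ∼ (0,p)) onto ℤ × ℤ
    (∀ a b : ℕ × ℕ, Wmap a = Wmap b →
      (a = b ∨ (a.2 = 0 ∧ b.1 = 0 ∧ a.1 = b.2) ∨ (a.1 = 0 ∧ b.2 = 0 ∧ a.2 = b.1))) ∧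
    Function.Surjective Wmap := by
  refine ⟨?_, ?_, ?_, ?_, ?_⟩
  · intro p q h
    ext <;> simp <;> omega
  · intro p q h
    ext <;> simp <;> omega
  · intro p
    constructor
    · simp [Wmap]
    · by_cases h : p = 0 <;> simp [Wmap, h]
  · rintro ⟨a, b⟩ ⟨c, d⟩ h
    simp only [Wmap] at h
    simp only [Prod.mk.injEq]
    split_ifs at h <;> simp only [Prod.mk.injEq] at h <;> omega
  · rintro ⟨x, y⟩
    by_cases h1 : x ≤ 0 ∧ 3 * x ≤ y
    · refine ⟨((y - 5 * x).toNat, (-x).toNat), ?_⟩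
      simp only [Wmap]
      split_ifs <;> simp only [Prod.mk.injEq] <;> omega
    · by_cases h2 : 0 ≤ x ∧ 0 ≤ y
      · refine ⟨(x.toNat, (y + 2 * x).toNat), ?_⟩
        simp only [Wmap]
        split_ifs <;> simp only [Prod.mk.injEq] <;> omega
      · refine ⟨((x - y).toNat, (2 * x - y).toNat), ?_⟩
        simp only [Wmap]
        split_ifs <;> simp only [Prod.mk.injEq] <;> omega
end
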